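/- For any C₀ > 4 and c₁ ∈ (0, 2) there exists C₂ > 0 such that the following holds for every sequence (ε_n) of positive reals satisfying 2 − c₁ ≥ ε_n ≥ C₂/√(log n) for all sufficiently large n. For each n, let d = ⌈(2 − ε_n) n ln n⌉, m = ⌊n / ln n⌋, and let (X, y) be an isotropic Gaussian sample of size n in dimension d with rows x₁,…,xₙ. Then lim_{n→∞} P[ max_{i ∈ [m]} (1/d) y_i y_{∖[m]}ᵀ X_{∖[m]} x_i ≥ 1 + ε_n / C₀ ] = 1, where X_{∖[m]} ∈ ℝ^{(n−m)×d} and y_{∖[m]} ∈ ℝ^{n−m} consist of the last n − m rows/entries of X and y. -/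

import Mathlib

open MeasureTheory ProbabilityTheory Matrix Filter

noncomputable section

/-- `X` has i.i.d. standard Gaussian entries (equivalently, its rows are i.i.d. `N(0, I_d)`). -/
structure IsGaussSample {Ω : Type*} [MeasurableSpace Ω] (μ : Measure Ω)
    {n d : ℕ} (X : Ω → Matrix (Fin n) (Fin d) ℝ) : Prop where
  meas : ∀ i j, Measurable fun ω => X ω i j
  indep : iIndepFun (fun (p : Fin n × Fin d) ω => X ω p.1 p.2) μ
  law : ∀ i j, Measure.map (fun ω => X ω i j) μ = gaussianReal 0 1

/-- Functions of disjoint blocks of independent variables are independent. -/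
lemma indep_blocks {Ω ι α β : Type*} [MeasurableSpace Ω] {μ : Measure Ω} [Fintype ι]
    [DecidableEq ι] [MeasurableSpace α] [MeasurableSpace β] {f : ι → Ω → ℝ}
    (hf : iIndepFun f μ) (hm : ∀ i, Measurable (f i)) (S T : Finset ι) (hST : Disjoint S T)
    (F : (ι → ℝ) → α) (G : (ι → ℝ) → β) (hFm : Measurable F) (hGm : Measurable G)
    (hF : ∀ u v, (∀ i ∈ S, u i = v i) → F u = F v)
    (hG : ∀ u v, (∀ i ∈ T, u i = v i) → G u = G v) :
    IndepFun (fun ω => F (fun i => f i ω)) (fun ω => G (fun i => f i ω)) μ := by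
  have h := hf.indepFun_finset S T hST hm
  have hext : ∀ U : Finset ι, Measurable
      (fun (u : U → ℝ) (i : ι) => if h : i ∈ U then u ⟨i, h⟩ else 0) := by
    intro U
    rw [measurable_pi_iff]
    intro i
    by_cases hi : i ∈ U
    · simp only [hi, dite_true]; exact measurable_pi_apply _
    · simp only [hi, dite_false]; exact measurable_const
  have h2 := h.comp (hFm.comp (hext S)) (hGm.comp (hext T))
  convert h2 using 1
  · funext ω
    apply hF
    intro i hi
    simp [hi]
  · funext ω
    apply hG
    intro i hi
    simp [hi]

/-- Linear combinations of independent standard Gaussians. -/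
lemma gauss_lin {Ω ι : Type*} [MeasurableSpace Ω] {μ : Measure Ω} [IsProbabilityMeasure μ]
    [Fintype ι] {f : ι → Ω → ℝ} (hf : iIndepFun f μ) (hm : ∀ i, Measurable (f i))
    (hl : ∀ i, μ.map (f i) = gaussianReal 0 1) (a : ι → ℝ) :
    μ.map (fun ω => ∑ i, a i * f i ω) =
      (gaussianReal 0 1).map (fun x => Real.sqrt (∑ i, a i ^ 2) * x) := by
  have hlaw : ∀ i, μ.map (fun ω => a i * f i ω) =
      (gaussianReal 0 1).map (fun x => a i * x) := by
    intro i
    rw [← hl i, Measure.map_map (by fun_prop) (hm i)]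
    rfl
  have hind : iIndepFun (fun i ω => a i * f i ω) μ :=
    hf.comp (fun i x => a i * x) (fun i => by fun_prop)
  have : IsProbabilityMeasure (μ.map (fun ω => ∑ i, a i * f i ω)) :=
    Measure.isProbabilityMeasure_map (by fun_prop)
  have : IsProbabilityMeasure ((gaussianReal 0 1).map
      (fun x => Real.sqrt (∑ i, a i ^ 2) * x)) :=
    Measure.isProbabilityMeasure_map (by fun_prop)
  apply Measure.ext_of_charFun
  rw [hind.charFun_map_fun_sum_eq_prod (fun i => by fun_prop)]
  funext t
  simp only [hlaw, gaussianReal_map_const_mul, Finset.prod_apply, charFun_gaussianReal]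
  rw [← Complex.exp_sum]
  congr 1
  simp
  have hs : (0:ℝ) ≤ ∑ i, a i ^ 2 := Finset.sum_nonneg fun i _ => sq_nonneg _
  have : ((Real.sqrt (∑ i, a i ^ 2) : ℝ) : ℂ) ^ 2 = ∑ i, (a i : ℂ) ^ 2 := by
    rw [← Complex.ofReal_pow, Real.sq_sqrt hs]; push_cast; rfl
  rw [this, Finset.sum_mul, Finset.sum_div]

/-- Lower bound on the Gaussian tail. -/
lemma gauss_tail (t : ℝ) (ht : 0 ≤ t) :
    ENNReal.ofReal ((Real.sqrt (2 * Real.pi))⁻¹ * Real.exp (-(t + 1) ^ 2 / 2)) ≤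
      gaussianReal 0 1 (Set.Ici t) := by
  calc _ = ∫⁻ x in Set.Icc t (t + 1), ENNReal.ofReal
        ((Real.sqrt (2 * Real.pi))⁻¹ * Real.exp (-(t + 1) ^ 2 / 2)) := by simp
    _ ≤ ∫⁻ x in Set.Icc t (t + 1), gaussianPDF 0 1 x := by
        apply setLIntegral_mono' measurableSet_Icc
        intro x hx
        rw [gaussianPDF]
        apply ENNReal.ofReal_le_ofReal
        rw [gaussianPDFReal]
        simp only [NNReal.coe_one, mul_one, sub_zero]
        have h1 := hx.1
        have h2 := hx.2
        have h3 : 0 ≤ x := ht.trans h1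
        gcongr
    _ ≤ ∫⁻ x in Set.Ici t, gaussianPDF 0 1 x :=
        lintegral_mono_set Set.Icc_subset_Ici_self
    _ = _ := (gaussianReal_apply 0 one_ne_zero _).symm
lemma IsGaussSample.row_bound {Ω : Type*} [MeasurableSpace Ω] {μ : Measure Ω}
    [IsProbabilityMeasure μ] {n d : ℕ} {X : Ω → Matrix (Fin n) (Fin d) ℝ}
    (hX : IsGaussSample μ X) (w : Fin d → ℝ) (s : ℝ) (hs : s = 1 ∨ s = -1) (r T t : ℝ)
    (ht : 0 ≤ t) (hr : r ≤ ∑ k, w k ^ 2) (hT : T ≤ t * Real.sqrt r) (i : Fin n) :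
    μ {ω | s * (w ⬝ᵥ X ω i) < T} ≤ 1 - gaussianReal 0 1 (Set.Ici t) := by
  have hind : iIndepFun (fun (k : Fin d) ω => X ω i k) μ :=
    hX.indep.precomp (g := fun k : Fin d => (i, k)) (fun a b h => by simpa using h)
  have hl := gauss_lin hind (fun k => hX.meas i k) (fun k => hX.law i k) (fun k => s * w k)
  have hmeas : Measurable (fun ω => ∑ k, s * w k * X ω i k) :=
    Finset.measurable_sum _ fun k _ => (hX.meas i k).const_mul _
  have hset : {ω | s * (w ⬝ᵥ X ω i) < T} = (fun ω => ∑ k, s * w k * X ω i k) ⁻¹' (Set.Iio T) := by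
    ext ω
    simp [dotProduct, Finset.mul_sum, mul_assoc]
  rw [hset, ← Measure.map_apply hmeas measurableSet_Iio, hl,
    Measure.map_apply (by fun_prop) measurableSet_Iio]
  have hsum : ∑ k, (s * w k) ^ 2 = ∑ k, w k ^ 2 := by
    rcases hs with rfl | rfl <;> simp
  rw [hsum, ← prob_compl_eq_one_sub measurableSet_Ici]
  apply measure_mono
  intro x hx
  simp only [Set.mem_preimage, Set.mem_Iio, Set.compl_Ici] at hx ⊢
  by_contra! hcon
  have h1 : Real.sqrt r ≤ Real.sqrt (∑ k, w k ^ 2) := Real.sqrt_le_sqrt hr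
  have : t * Real.sqrt r ≤ Real.sqrt (∑ k, w k ^ 2) * x := by
    rw [mul_comm t]; gcongr
  linarith

lemma IsGaussSample.rows_bound {Ω : Type*} [MeasurableSpace Ω] {μ : Measure Ω}
    [IsProbabilityMeasure μ] {n d : ℕ} {X : Ω → Matrix (Fin n) (Fin d) ℝ}
    (hX : IsGaussSample μ X) (w : Fin d → ℝ) (y : Fin n → ℝ) (hy : ∀ i, y i = 1 ∨ y i = -1)
    (r T t : ℝ)
    (ht : 0 ≤ t) (hr : r ≤ ∑ k, w k ^ 2) (hT : T ≤ t * Real.sqrt r) (S : Finset (Fin n)) :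
    μ {ω | ∀ i ∈ S, y i * (w ⬝ᵥ X ω i) < T} ≤ (1 - gaussianReal 0 1 (Set.Ici t)) ^ S.card := by
  classical
  induction S using Finset.induction_on with
  | empty => simp
  | insert a S ha ih =>
    have hind := indep_blocks hX.indep (fun p => hX.meas p.1 p.2)
      (Finset.univ.filter (fun p => p.1 = a)) (Finset.univ.filter (fun p => p.1 ∈ S))
      (by
        rw [Finset.disjoint_left]
        intro p hp hp'
        simp only [Finset.mem_filter, Finset.mem_univ, true_and] at hp hp'
        exact ha (hp ▸ hp'))
      (fun u => y a * ∑ k, w k * u (a, k))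
      (fun u (i : S) => y i * ∑ k, w k * u ((i : Fin n), k))
      (by fun_prop) (by fun_prop)
      (by
        intro u v h
        congr 1
        exact Finset.sum_congr rfl fun k _ => by rw [h (a, k) (by simp)])
      (by
        intro u v h
        funext i
        congr 1
        exact Finset.sum_congr rfl fun k _ => by rw [h ((i : Fin n), k) (by simp)])
    have h1 := hind.measure_inter_preimage_eq_mul (Set.Iio T) (Set.univ.pi fun _ => Set.Iio T)
      measurableSet_Iio (MeasurableSet.univ_pi fun _ => measurableSet_Iio)
    have e : {ω | ∀ i ∈ insert a S, y i * (w ⬝ᵥ X ω i) < T} = 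
      ((fun ω => y a * ∑ k, w k * X ω a k) ⁻¹' Set.Iio T) ∩
       ((fun ω (i : S) => y i * ∑ k, w k * X ω i k) ⁻¹' (Set.univ.pi fun _ => Set.Iio T)) := by
      ext ω
      simp [dotProduct]
    have e1 : ((fun ω => y a * ∑ k, w k * X ω a k) ⁻¹' Set.Iio T) =
      {ω | y a * (w ⬝ᵥ X ω a) < T} := by ext; simp [dotProduct]
    have e2 : ((fun ω (i : S) => y i * ∑ k, w k * X ω i k) ⁻¹'
        (Set.univ.pi fun _ => Set.Iio T)) = {ω | ∀ i ∈ S, y i * (w ⬝ᵥ X ω i) < T} := by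
      ext; simp [dotProduct]
    rw [e, h1, e1, e2, Finset.card_insert_of_notMem ha, pow_succ, mul_comm]
    gcongr
    exact hX.row_bound w _ (hy a) r T t ht hr hT a

/-- The conditioning step. -/
lemma IsGaussSample.cond_bound {Ω : Type*} [MeasurableSpace Ω] {μ : Measure Ω}
    [IsProbabilityMeasure μ] {n d : ℕ} {X : Ω → Matrix (Fin n) (Fin d) ℝ}
    (hX : IsGaussSample μ X) (y : Fin n → ℝ) (hy : ∀ i, y i = 1 ∨ y i = -1)
    (r T t : ℝ) (ht : 0 ≤ t) (hT : T ≤ t * Real.sqrt r) (S : Finset (Fin n)) :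
    μ {ω | ∀ i ∈ S, y i * ((fun k => ∑ j ∈ Sᶜ, y j * X ω j k) ⬝ᵥ X ω i) < T} ≤
      μ {ω | ∑ k, (∑ j ∈ Sᶜ, y j * X ω j k) ^ 2 < r} +
      (1 - gaussianReal 0 1 (Set.Ici t)) ^ S.card := by
  classical
  set W : Ω → Fin d → ℝ := fun ω k => ∑ j ∈ Sᶜ, y j * X ω j k with hW
  set Z : Ω → S → Fin d → ℝ := fun ω i k => X ω i k with hZ
  have hWm : Measurable W := by
    rw [measurable_pi_iff]; intro k
    exact Finset.measurable_sum _ fun j _ => (hX.meas j k).const_mul _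
  have hZm : Measurable Z := by
    rw [measurable_pi_iff]; intro i
    rw [measurable_pi_iff]; intro k
    exact hX.meas i k
  have hind : IndepFun W Z μ := indep_blocks hX.indep (fun p => hX.meas p.1 p.2)
      (Finset.univ.filter (fun p => p.1 ∈ Sᶜ)) (Finset.univ.filter (fun p => p.1 ∈ S))
      (by
        rw [Finset.disjoint_left]
        intro p hp hp'
        simp only [Finset.mem_filter, Finset.mem_univ, true_and, Finset.mem_compl] at hp hp'
        exact hp hp')
      (fun u k => ∑ j ∈ Sᶜ, y j * u (j, k))
      (fun u (i : S) k => u ((i : Fin n), k))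
      (by fun_prop) (by fun_prop)
      (by
        intro u v h
        funext k
        exact Finset.sum_congr rfl fun j hj => by rw [h (j, k) (by simpa using hj)])
      (by
        intro u v h
        funext i k
        exact h _ (by simp))
  have hprod := hind.map_prod_eq_prod_map_map hWm.aemeasurable hZm.aemeasurable
  set E : Set ((Fin d → ℝ) × (S → Fin d → ℝ)) :=
    {q | ∀ i : S, y i * (q.1 ⬝ᵥ q.2 i) < T} with hE
  have hEm : MeasurableSet E := by
    rw [hE, Set.ofPred_forall]
    refine MeasurableSet.iInter fun i => measurableSet_lt ?_ measurable_const
    simp only [dotProduct]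
    fun_prop
  have hGm : MeasurableSet {w : Fin d → ℝ | ∑ k, w k ^ 2 < r} :=
    measurableSet_lt (by fun_prop) measurable_const
  have : IsProbabilityMeasure (μ.map W) := Measure.isProbabilityMeasure_map hWm.aemeasurable
  have : IsProbabilityMeasure (μ.map Z) := Measure.isProbabilityMeasure_map hZm.aemeasurable
  have e : {ω | ∀ i ∈ S, y i * (W ω ⬝ᵥ X ω i) < T} = (fun ω => (W ω, Z ω)) ⁻¹' E := by
    ext ω
    simp only [hE, hZ, Set.mem_ofPred_eq, Set.mem_preimage, Subtype.forall]
  change μ {ω | ∀ i ∈ S, y i * (W ω ⬝ᵥ X ω i) < T} ≤ _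
  rw [e, ← Measure.map_apply (hWm.prodMk hZm) hEm, hprod, Measure.prod_apply hEm]
  set B := (1 - gaussianReal 0 1 (Set.Ici t)) ^ S.card with hB
  calc ∫⁻ w, μ.map Z (Prod.mk w ⁻¹' E) ∂(μ.map W)
      ≤ ∫⁻ w, ({w : Fin d → ℝ | ∑ k, w k ^ 2 < r}.indicator 1 w + B) ∂(μ.map W) := by
        apply lintegral_mono
        intro w
        by_cases hw : ∑ k, w k ^ 2 < r
        · have h0 : ({w : Fin d → ℝ | ∑ k, w k ^ 2 < r}.indicator (1 : (Fin d → ℝ) → ENNReal) w) = 1 :=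
            Set.indicator_of_mem (s := {w : Fin d → ℝ | ∑ k, w k ^ 2 < r}) (by exact hw) _
          dsimp only
          rw [h0]
          exact prob_le_one.trans le_self_add
        · refine le_trans ?_ le_add_self
          dsimp only
          rw [Measure.map_apply hZm (measurable_prodMk_left hEm)]
          refine le_trans (le_of_eq ?_)
            (hX.rows_bound w y hy r T t ht (not_lt.mp hw) hT S)
          congr 1
          ext ω
          simp only [hE, hZ, Set.mem_ofPred_eq, Set.mem_preimage, Subtype.forall]
    _ = _ := by
        rw [lintegral_add_right _ measurable_const, lintegral_indicator_one hGm,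
          Measure.map_apply hWm hGm]
        simp
        rfl
/-- Variance of the square of a standard Gaussian (only finiteness matters). -/
def gaussV : ℝ := Var[fun x : ℝ => x ^ 2; gaussianReal 0 1]

lemma memLp_sq_gauss : MemLp (fun x : ℝ => x ^ 2) 2 (gaussianReal 0 1) := by
  have h := memLp_id_gaussianReal' (μ := 0) (v := 1) 4 (by simp)
  have : ENNReal.HolderTriple 4 4 2 := ⟨by
    rw [← two_mul, show (4 : ENNReal) = 2 * 2 by norm_num, ENNReal.mul_inv (by simp) (by simp),
      ← mul_assoc, ENNReal.mul_inv_cancel (by simp) (by simp), one_mul]⟩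
  have h2 := h.mul (r := 2) h
  convert h2 using 1
  funext x
  simp [sq]

/-- Concentration of the norm of the label-weighted sum. -/
lemma IsGaussSample.norm_conc {Ω : Type*} [MeasurableSpace Ω] {μ : Measure Ω}
    [IsProbabilityMeasure μ] {n d : ℕ} {X : Ω → Matrix (Fin n) (Fin d) ℝ}
    (hX : IsGaussSample μ X) (y : Fin n → ℝ) (hy : ∀ i, y i = 1 ∨ y i = -1)
    (S : Finset (Fin n)) (δ : ℝ) (hδ : 0 < δ) (hd : 0 < d) :
    μ {ω | ∑ k, (∑ j ∈ S, y j * X ω j k) ^ 2 < (S.card : ℝ) * d * (1 - δ)} ≤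
      ENNReal.ofReal (gaussV / (d * δ ^ 2)) := by
  classical
  rcases S.eq_empty_or_nonempty with rfl | hS
  · simp
  have hc : (0:ℝ) < S.card := by exact_mod_cast hS.card_pos
  set s : ℝ := (S.card : ℝ) with hs
  have hm : ∀ k, Measurable (fun ω => ∑ j ∈ S, y j * X ω j k) := fun k =>
    Finset.measurable_sum _ fun j _ => (hX.meas j k).const_mul _
  have hlaw : ∀ k, μ.map (fun ω => ∑ j ∈ S, y j * X ω j k) =
      (gaussianReal 0 1).map (fun x => Real.sqrt s * x) := by
    intro k
    have hind : iIndepFun (fun (j : S) ω => X ω j k) μ :=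
      hX.indep.precomp (g := fun j : S => ((j : Fin n), k)) (fun a b h => by
        exact Subtype.ext (Prod.ext_iff.mp h).1)
    have hl := gauss_lin hind (fun j => hX.meas j k) (fun j => hX.law j k) (fun j => y j)
    have h1 : ∑ j : S, y j ^ 2 = s := by
      have : ∀ j : S, y j ^ 2 = 1 := fun j => by rcases hy j with h | h <;> simp [h]
      rw [Finset.sum_congr rfl fun j _ => this j]
      simp [hs]
    rw [h1] at hl
    rw [← hl]
    congr 1
    funext ω
    exact (Finset.sum_coe_sort S (fun j => y j * X ω j k)).symm
  -- normalized squares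
  set Q : Fin d → Ω → ℝ := fun k ω => (∑ j ∈ S, y j * X ω j k) ^ 2 / s with hQ
  have hQm : ∀ k, Measurable (Q k) := fun k => ((hm k).pow_const 2).div_const s
  have hQlaw : ∀ k, μ.map (Q k) = (gaussianReal 0 1).map (fun x => x ^ 2) := by
    intro k
    have : Q k = (fun x => x ^ 2 / s) ∘ (fun ω => ∑ j ∈ S, y j * X ω j k) := rfl
    rw [this, ← Measure.map_map (by fun_prop) (hm k), hlaw k,
      Measure.map_map (by fun_prop) (by fun_prop)]
    congr 1
    funext x
    simp only [Function.comp]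
    rw [mul_pow, Real.sq_sqrt hc.le]
    field_simp
  have hid : ∀ k, IdentDistrib (Q k) (fun x : ℝ => x ^ 2) μ (gaussianReal 0 1) := fun k =>
    ⟨(hQm k).aemeasurable, by fun_prop, hQlaw k⟩
  have hLp : ∀ k, MemLp (Q k) 2 μ := fun k => (hid k).memLp_iff.mpr memLp_sq_gauss
  have hint : ∀ k, ∫ ω, Q k ω ∂μ = 1 := by
    intro k
    rw [(hid k).integral_eq]
    have h := variance_id_gaussianReal (μ := 0) (v := 1)
    rw [variance_of_integral_eq_zero (by fun_prop) (by simp)] at h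
    simpa using h
  have hvar : ∀ k, Var[Q k; μ] = gaussV := fun k => (hid k).variance_eq
  have hpair : Set.Pairwise (↑(Finset.univ : Finset (Fin d))) fun k l => IndepFun (Q k) (Q l) μ := by
    intro k _ l _ hkl
    exact indep_blocks hX.indep (fun p => hX.meas p.1 p.2)
      (Finset.univ.filter (fun p => p.2 = k)) (Finset.univ.filter (fun p => p.2 = l))
      (by
        rw [Finset.disjoint_left]
        intro p hp hp'
        simp only [Finset.mem_filter, Finset.mem_univ, true_and] at hp hp'
        exact hkl (hp.symm.trans hp'))
      (fun u => (∑ j ∈ S, y j * u (j, k)) ^ 2 / s)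
      (fun u => (∑ j ∈ S, y j * u (j, l)) ^ 2 / s)
      (by fun_prop) (by fun_prop)
      (by
        intro u v h
        congr 2
        exact Finset.sum_congr rfl fun j _ => by rw [h (j, k) (by simp)])
      (by
        intro u v h
        congr 2
        exact Finset.sum_congr rfl fun j _ => by rw [h (j, l) (by simp)])
  have hV := IndepFun.variance_sum (fun k _ => hLp k) hpair
  simp only [hvar, Finset.sum_const, Finset.card_univ, Fintype.card_fin, nsmul_eq_mul] at hV
  have hd' : (0:ℝ) < d := by exact_mod_cast hd
  have hsumLp : MemLp (∑ k, Q k) 2 μ := memLp_finsetSum' _ fun k _ => hLp k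
  have hE : ∫ ω, (∑ k, Q k) ω ∂μ = d := by
    simp only [Finset.sum_apply]
    rw [integral_finsetSum _ fun k _ => (hLp k).integrable (by norm_num)]
    simp [hint]
  have hch := meas_ge_le_variance_div_sq hsumLp (c := d * δ) (by positivity)
  rw [hV, hE] at hch
  refine le_trans (measure_mono ?_) (hch.trans (le_of_eq ?_))
  · intro ω hω
    simp only [Set.mem_ofPred_eq, Finset.sum_apply, hQ] at hω ⊢
    rw [← Finset.sum_div, le_abs]
    right
    have : (∑ k, (∑ j ∈ S, y j * X ω j k) ^ 2) / s ≤ d * (1 - δ) := by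
      rw [div_le_iff₀ hc]; nlinarith
    linarith
  · congr 1
    field_simp
lemma arith_key (C₀ ε : ℝ) (hC : 4 < C₀) (h0 : 0 < ε) :
    (1 + ε / C₀) ^ 2 * (2 - ε) ≤ 2 - (1 - 4 / C₀) * ε := by
  have ha : 0 < 1 / C₀ := by positivity
  have ha1 : 1 / C₀ ≤ 1 := by rw [div_le_one (by linarith)]; linarith
  have e1 : ε / C₀ = (1 / C₀) * ε := by ring
  have e2 : 4 / C₀ = 4 * (1 / C₀) := by ring
  rw [e1, e2]
  set a := 1 / C₀
  have h1 : 0 ≤ a * (1 - a) * ε ^ 2 :=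
    mul_nonneg (mul_nonneg ha.le (by linarith)) (sq_nonneg _)
  have h2 : 0 ≤ a ^ 2 * ε ^ 3 := by positivity
  nlinarith

lemma arith_T (C₀ ε n L d m : ℝ) (hC : 4 < C₀) (h0 : 0 < ε) (h2 : ε < 2) (hn : 4 ≤ n)
    (hL : 16 ≤ L) (hd0 : 0 ≤ d) (hd : d ≤ (2 - ε) * n * L + 1) (hm : m ≤ n / L) :
    d * (1 + ε / C₀) ≤ Real.sqrt ((2 - (1 - 4 / C₀) * ε) * L + 16) *
      Real.sqrt ((n - m) * d * (1 - 1 / L)) := by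
  have hκ : 0 < 1 - 4 / C₀ := by
    rw [sub_pos, div_lt_one (by linarith)]; exact hC
  have hκ1 : 1 - 4 / C₀ ≤ 1 := by
    have : 0 < 4 / C₀ := by positivity
    linarith
  have hkey := arith_key C₀ ε hC h0
  set κ := 1 - 4 / C₀
  set A := 2 - κ * ε with hA
  have hA0 : 0 ≤ A := by nlinarith
  have hA2 : A ≤ 2 := by nlinarith
  have hL0 : 0 < L := by linarith
  rw [← Real.sqrt_mul (by positivity)]
  apply Real.le_sqrt_of_sq_le
  have he0 : 0 ≤ ε / C₀ := by positivity
  have he1 : ε / C₀ ≤ 1 := by rw [div_le_one (by linarith)]; linarith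
  have hu : (1 + ε / C₀) ^ 2 ≤ 4 := by nlinarith
  have hi0 : 0 < 1 / L := by positivity
  have hi : 1 / L ≤ 1 / 16 := one_div_le_one_div_of_le (by norm_num) hL
  have hiL : (1 / L) * L = 1 := by field_simp
  have hm' : m ≤ n * (1 / L) := by rw [mul_one_div]; exact hm
  set v := 1 / L
  have l1 : d * (1 + ε / C₀) ^ 2 ≤ n * (A * L + 1) := by
    calc d * (1 + ε / C₀) ^ 2 ≤ ((2 - ε) * n * L + 1) * (1 + ε / C₀) ^ 2 := by gcongr
      _ = (1 + ε / C₀) ^ 2 * (2 - ε) * (n * L) + (1 + ε / C₀) ^ 2 := by ring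
      _ ≤ A * (n * L) + 4 := by gcongr
      _ ≤ n * (A * L + 1) := by linarith
  have l2 : A * L + 1 ≤ (A * L + 16) * ((1 - v) * (1 - v)) := by
    have : (A * L + 16) * ((1 - v) * (1 - v)) =
      A * L + 16 - 2 * A * (v * L) - 32 * v + (A * L + 16) * v ^ 2 := by ring
    rw [this, hiL]
    have : 0 ≤ (A * L + 16) * v ^ 2 := by positivity
    linarith
  have l3 : n * (1 - v) ≤ n - m := by linarith
  calc (d * (1 + ε / C₀)) ^ 2 = d * (d * (1 + ε / C₀) ^ 2) := by ring
    _ ≤ d * (n * (A * L + 1)) := by gcongr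
    _ ≤ d * (n * ((A * L + 16) * ((1 - v) * (1 - v)))) := by gcongr
    _ = (A * L + 16) * ((n * (1 - v)) * d * (1 - v)) := by ring
    _ ≤ (A * L + 16) * ((n - m) * d * (1 - v)) := by
        have : 0 ≤ 1 - v := by linarith
        gcongr

lemma arith_q (κ ε n L m : ℝ) (hκ : 0 < κ) (h0 : 0 < ε)
    (hκε : κ * ε ≤ 2) (hn : 0 < n) (hL : 16 ≤ L) (hnL : L = Real.log n) (hn2 : 2 * L ≤ n)
    (hm : n / L - 1 ≤ m) (hε : 10 / κ / Real.sqrt L ≤ ε) :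
    Real.exp (Real.sqrt L - 9) / 12 ≤ m * ((Real.sqrt (2 * Real.pi))⁻¹ *
      Real.exp (-(Real.sqrt ((2 - κ * ε) * L + 16) + 1) ^ 2 / 2)) := by
  have hL0 : 0 < L := by linarith
  set s := Real.sqrt L with hs
  have hs0 : 0 < s := Real.sqrt_pos.mpr hL0
  have hs2 : s ^ 2 = L := Real.sq_sqrt hL0.le
  have hnn : 0 ≤ (2 - κ * ε) * L + 16 := by
    have : 0 ≤ (2 - κ * ε) * L := mul_nonneg (by linarith) hL0.le
    linarith
  set t := Real.sqrt ((2 - κ * ε) * L + 16) with ht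
  have ht2 : t ^ 2 = (2 - κ * ε) * L + 16 := Real.sq_sqrt hnn
  have hts : t ≤ 2 * s := by
    apply Real.sqrt_le_iff.mpr
    refine ⟨by positivity, ?_⟩
    have : 0 ≤ κ * ε * L := by positivity
    nlinarith
  have hεs : 5 * s ≤ κ * ε * L / 2 := by
    rw [div_div, div_le_iff₀ (by positivity)] at hε
    rw [← hs2]
    nlinarith
  have hm2 : n / (2 * L) ≤ m := by
    have h1 : 1 ≤ n / (2 * L) := by rw [le_div_iff₀ (by positivity)]; linarith
    have h2 : n / L = 2 * (n / (2 * L)) := by field_simp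
    linarith
  have hpi : (1 / 3 : ℝ) ≤ (Real.sqrt (2 * Real.pi))⁻¹ := by
    rw [one_div]
    apply inv_anti₀ (by positivity)
    rw [Real.sqrt_le_iff]
    refine ⟨by norm_num, ?_⟩
    have := Real.pi_lt_d2
    linarith
  have hexp : Real.exp (3 * s - 9 - L) ≤ Real.exp (-(t + 1) ^ 2 / 2) := by
    apply Real.exp_le_exp.mpr
    nlinarith
  have hnexp : n = Real.exp L := by rw [hnL, Real.exp_log hn]
  have hq : s ^ 2 / 2 ≤ Real.exp s := by
    have := Real.quadratic_le_exp_of_nonneg hs0.le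
    linarith
  have hq' : (1:ℝ) ≤ Real.exp s := Real.one_le_exp hs0.le
  calc Real.exp (s - 9) / 12 = (1 / (6 * L)) * ((s ^ 2 / 2) * 1 * Real.exp (s - 9)) := by
        rw [hs2]; field_simp; norm_num
    _ ≤ (1 / (6 * L)) * (Real.exp s * Real.exp s * Real.exp (s - 9)) := by gcongr
    _ = n / (2 * L) * (1 / 3 * Real.exp (3 * s - 9 - L)) := by
        rw [hnexp]
        have : Real.exp s * Real.exp s * Real.exp (s - 9) =
          Real.exp L * Real.exp (3 * s - 9 - L) := by
          rw [← Real.exp_add, ← Real.exp_add, ← Real.exp_add]; congr 1; ring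
        rw [this]; field_simp; norm_num
    _ ≤ _ := by
        have hm0 : 0 ≤ m := le_trans (by positivity) hm2
        gcongr

lemma pow_bound (m : ℕ) (q : ℝ) (hq : 0 ≤ q) (p : ENNReal) (hp : ENNReal.ofReal q ≤ p) :
    (1 - p) ^ m ≤ ENNReal.ofReal (Real.exp (-(m * q))) := by
  have h1 : 1 - p ≤ ENNReal.ofReal (Real.exp (-q)) := by
    calc 1 - p ≤ 1 - ENNReal.ofReal q := tsub_le_tsub_left hp 1
      _ = ENNReal.ofReal (1 - q) := by
        rw [← ENNReal.ofReal_one, ENNReal.ofReal_sub _ hq]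
      _ ≤ _ := ENNReal.ofReal_le_ofReal (by have := Real.add_one_le_exp (-q); linarith)
  calc (1 - p) ^ m ≤ (ENNReal.ofReal (Real.exp (-q))) ^ m := by gcongr
    _ = _ := by
      rw [← ENNReal.ofReal_pow (Real.exp_pos _).le, ← Real.exp_nat_mul]
      congr 2; ring

lemma IsGaussSample.final_bound {Ω : Type*} [MeasurableSpace Ω] {μ : Measure Ω}
    [IsProbabilityMeasure μ] (C₀ c₁ ε : ℝ) (hC : 4 < C₀) (hc : 0 < c₁) (h0 : 0 < ε) (n m d : ℕ)
    (hd : d = ⌈(2 - ε) * n * Real.log n⌉₊) (hm : m = ⌊(n : ℝ) / Real.log n⌋₊)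
    {X : Ω → Matrix (Fin n) (Fin d) ℝ}
    (hX : IsGaussSample μ X) (y : Fin n → ℝ) (hy : ∀ i, y i = 1 ∨ y i = -1)
    (hε : 10 / (1 - 4 / C₀) / Real.sqrt (Real.log n) ≤ ε) (hε2 : ε ≤ 2 - c₁)
    (hL : 16 ≤ Real.log n) (hn : 4 ≤ n) (hn2 : 2 * Real.log n ≤ n) :
    1 - (ENNReal.ofReal (gaussV / c₁ * (Real.log n / n)) +
        ENNReal.ofReal (Real.exp (-(Real.exp (Real.sqrt (Real.log n) - 9) / 12)))) ≤
      μ {ω | ∃ i : Fin n, (i : ℕ) < m ∧ 1 + ε / C₀ ≤ ((d : ℝ))⁻¹ *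
        (y i * ∑ j ∈ Finset.univ.filter (fun j : Fin n => m ≤ (j : ℕ)),
          y j * (X ω j ⬝ᵥ X ω i))} := by
  classical
  set L := Real.log n with hLdef
  have hL0 : 0 < L := by linarith
  have hnR : (4:ℝ) ≤ n := by exact_mod_cast hn
  have hn0 : (0:ℝ) < n := by linarith
  have hκ : 0 < 1 - 4 / C₀ := by
    rw [sub_pos, div_lt_one (by linarith)]; exact hC
  have hκ1 : 1 - 4 / C₀ ≤ 1 := by
    have : 0 < 4 / C₀ := by positivity
    linarith
  have hmR : (m : ℝ) ≤ n / L := by rw [hm]; exact Nat.floor_le (by positivity)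
  have hmR2 : n / L - 1 ≤ (m : ℝ) := by rw [hm]; exact (Nat.sub_one_lt_floor _).le
  have hmn : m ≤ n := by
    have : (m : ℝ) ≤ n := hmR.trans (div_le_self hn0.le (by linarith))
    exact_mod_cast this
  have hpos : c₁ * (n * L) ≤ (2 - ε) * n * L := by
    rw [mul_assoc (2 - ε)]
    gcongr
    linarith
  have hdlo : c₁ * (n * L) ≤ (d : ℝ) := by
    rw [hd]; exact hpos.trans (Nat.le_ceil _)
  have hdpos : (0:ℝ) < d := lt_of_lt_of_le (by positivity) hdlo
  have hd0 : 0 < d := by exact_mod_cast hdpos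
  have hdhi : (d : ℝ) ≤ (2 - ε) * n * L + 1 := by
    rw [hd]; exact (Nat.ceil_lt_add_one (le_trans (by positivity) hpos)).le
  set S : Finset (Fin n) := Finset.univ.filter (fun i : Fin n => (i : ℕ) < m) with hS
  have hSc : Sᶜ = Finset.univ.filter (fun j : Fin n => m ≤ (j : ℕ)) := by
    ext j; simp [hS]
  have hcard : S.card = m := by
    rw [hS, Fin.card_filter_val_lt]; exact min_eq_right hmn
  have hcardc : ((Sᶜ).card : ℝ) = n - m := by
    rw [Finset.card_compl, hcard, Fintype.card_fin, Nat.cast_sub hmn]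
  set t := Real.sqrt ((2 - (1 - 4 / C₀) * ε) * L + 16) with ht
  have hT := arith_T C₀ ε n L d m hC h0 (by linarith) hnR hL hdpos.le hdhi hmR
  have hb := hX.cond_bound y hy _ _ t (Real.sqrt_nonneg _) hT S
  have hconc := hX.norm_conc y hy Sᶜ (1 / L) (by positivity) hd0
  rw [hcardc] at hconc
  have hq := arith_q (1 - 4 / C₀) ε n L m hκ h0 (by nlinarith) hn0 hL hLdef hn2 hmR2 hε
  have hpow := pow_bound m _ (by positivity) _ (gauss_tail t (Real.sqrt_nonneg _))
  rw [hcard] at hb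
  have hb2 : (1 - gaussianReal 0 1 (Set.Ici t)) ^ m ≤
      ENNReal.ofReal (Real.exp (-(Real.exp (Real.sqrt L - 9) / 12))) :=
    hpow.trans (ENNReal.ofReal_le_ofReal (Real.exp_le_exp.mpr (neg_le_neg hq)))
  have hV : 0 ≤ gaussV := variance_nonneg _ _
  have hb1 : ENNReal.ofReal (gaussV / (d * (1 / L) ^ 2)) ≤
      ENNReal.ofReal (gaussV / c₁ * (L / n)) := by
    apply ENNReal.ofReal_le_ofReal
    calc gaussV / (d * (1 / L) ^ 2) ≤ gaussV / (c₁ * (n * L) * (1 / L) ^ 2) := by gcongr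
      _ = _ := by field_simp
  rw [tsub_le_iff_right]
  calc (1 : ENNReal) = μ Set.univ := measure_univ.symm
    _ ≤ μ ({ω | ∃ i : Fin n, (i : ℕ) < m ∧ 1 + ε / C₀ ≤ ((d : ℝ))⁻¹ *
        (y i * ∑ j ∈ Finset.univ.filter (fun j : Fin n => m ≤ (j : ℕ)),
          y j * (X ω j ⬝ᵥ X ω i))} ∪
        {ω | ∀ i ∈ S, y i * ((fun k => ∑ j ∈ Sᶜ, y j * X ω j k) ⬝ᵥ X ω i) <
          d * (1 + ε / C₀)}) := by
        apply measure_mono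
        intro ω _
        by_cases h : ∀ i ∈ S, y i * ((fun k => ∑ j ∈ Sᶜ, y j * X ω j k) ⬝ᵥ X ω i) <
          d * (1 + ε / C₀)
        · exact Or.inr h
        · left
          push Not at h
          obtain ⟨i, hi, hi2⟩ := h
          refine ⟨i, by simpa [hS] using hi, ?_⟩
          rw [← hSc, le_inv_mul_iff₀ hdpos]
          refine hi2.trans (le_of_eq ?_)
          congr 1
          simp only [dotProduct, Finset.sum_mul, Finset.mul_sum]
          rw [Finset.sum_comm]
          simp only [mul_assoc]
    _ ≤ _ := measure_union_le _ _
    _ ≤ _ := by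
        gcongr
        exact hb.trans (add_le_add (hconc.trans hb1) hb2)

theorem stmt15 :
    ∀ C₀ : ℝ, 4 < C₀ → ∀ c₁ : ℝ, 0 < c₁ → c₁ < 2 →
    ∃ C₂ > (0 : ℝ),
      ∀ ε : ℕ → ℝ, (∀ n, 0 < ε n) →
        (∀ᶠ n : ℕ in atTop, C₂ / Real.sqrt (Real.log n) ≤ ε n ∧ ε n ≤ 2 - c₁) →
        ∀ (Ω : ℕ → Type*) [∀ n, MeasurableSpace (Ω n)] (μ : ∀ n, Measure (Ω n)),
          (∀ n, IsProbabilityMeasure (μ n)) →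
        ∀ (X : ∀ n : ℕ, Ω n → Matrix (Fin n) (Fin ⌈(2 - ε n) * n * Real.log n⌉₊) ℝ)
          (y : ∀ n : ℕ, Fin n → ℝ),
          (∀ n i, y n i = 1 ∨ y n i = -1) →
          (∀ n, IsGaussSample (μ n) (X n)) →
          Tendsto
            (fun n => μ n {ω | ∃ i : Fin n, (i : ℕ) < ⌊(n : ℝ) / Real.log n⌋₊ ∧
                1 + ε n / C₀ ≤ ((⌈(2 - ε n) * n * Real.log n⌉₊ : ℝ))⁻¹ *
                  (y n i * ∑ j ∈ Finset.univ.filter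
                      (fun j : Fin n => ⌊(n : ℝ) / Real.log n⌋₊ ≤ (j : ℕ)),
                    y n j * (X n ω j ⬝ᵥ X n ω i))})
            atTop (nhds 1) := by
  intro C₀ hC c₁ hc _
  have hκ : 0 < 1 - 4 / C₀ := by
    rw [sub_pos, div_lt_one (by linarith)]; exact hC
  refine ⟨10 / (1 - 4 / C₀), by positivity, ?_⟩
  intro ε h0 hε Ω _ μ hμ X y hy hX
  have hlog : Tendsto (fun n : ℕ => Real.log n) atTop atTop :=
    Real.tendsto_log_atTop.comp tendsto_natCast_atTop_atTop
  have hratio : Tendsto (fun n : ℕ => Real.log n / n) atTop (nhds 0) := by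
    have h := Real.isLittleO_log_id_atTop.tendsto_div_nhds_zero
    exact h.comp tendsto_natCast_atTop_atTop
  have hlim1 : Tendsto (fun n : ℕ => ENNReal.ofReal (gaussV / c₁ * (Real.log n / n))) atTop
      (nhds 0) := by
    have := ENNReal.tendsto_ofReal (hratio.const_mul (gaussV / c₁))
    simpa using this
  have hlim2 : Tendsto (fun n : ℕ => ENNReal.ofReal
      (Real.exp (-(Real.exp (Real.sqrt (Real.log n) - 9) / 12)))) atTop (nhds 0) := by
    have h1 : Tendsto (fun n : ℕ => Real.sqrt (Real.log n) - 9) atTop atTop :=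
      tendsto_atTop_add_const_right _ (-9) (Real.tendsto_sqrt_atTop.comp hlog)
    have h2 := (Real.tendsto_exp_atTop.comp h1).atTop_div_const (show (0:ℝ) < 12 by norm_num)
    have h3 := ENNReal.tendsto_ofReal (Real.tendsto_exp_neg_atTop_nhds_zero.comp h2)
    simpa [Function.comp_def] using h3
  have hlim : Tendsto (fun n : ℕ => 1 - (ENNReal.ofReal (gaussV / c₁ * (Real.log n / n)) +
      ENNReal.ofReal (Real.exp (-(Real.exp (Real.sqrt (Real.log n) - 9) / 12))))) atTop
      (nhds 1) := by
    have := ENNReal.Tendsto.sub (tendsto_const_nhds (x := (1 : ENNReal))) (hlim1.add hlim2)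
      (Or.inl ENNReal.one_ne_top)
    simpa using this
  refine tendsto_of_tendsto_of_tendsto_of_le_of_le' hlim tendsto_const_nhds ?_
    (Eventually.of_forall fun n => prob_le_one)
  filter_upwards [hε, hlog.eventually_ge_atTop 16, eventually_ge_atTop 4,
    hratio.eventually_le_const (show (0:ℝ) < 1 / 2 by norm_num)] with n hn1 hn2 hn3 hn4
  have hn0 : (0:ℝ) < n := by exact_mod_cast (by omega : 0 < n)
  exact (hX n).final_bound C₀ c₁ (ε n) hC hc (h0 n) n _ _ rfl rfl (y n) (hy n) hn1.1 hn1.2 hn2 hn3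
    (by rw [div_le_iff₀ hn0] at hn4; linarith)

end
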